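/- arXiv:2105.10677 — 2 statements merged into one kernel-verified Lean document; each statement's English description precedes it below -/
import Mathlib

section
/- Let 1 ≤ p < q ≤ m with q − p > 1, let D be a regular domain that is a (p, q)-hybrid* domain, and let φ : D^n → Δ(A) be a unanimous, strategy-proof RSCF satisfying the tops-only property. Since D is minimally rich, φ induces a well-defined random voting scheme φ̃ : A^n → Δ(A) by φ̃(x_1, …, x_n) = φ(P) for any P ∈ D^n with r_1(P_i) = x_i for all i. Then φ̃ is strategy-proof on the (p, q)-hybrid domain: for every i ∈ N, all P̂_i, P̂_i′ ∈ D_≺(p, q) and all P̂_{-i} ∈ [D_≺(p, q)]^{n−1}, the lottery φ̃(r_1(P̂_i), r_1(P̂_{-i})) first-order stochastically dominates φ̃(r_1(P̂_i′), r_1(P̂_{-i})) w.r.t. P̂_i, i.e., Σ_{t=1}^{k} φ̃_{r_t(P̂_i)}(r_1(P̂_i), r_1(P̂_{-i})) ≥ Σ_{t=1}^{k} φ̃_{r_t(P̂_i)}(r_1(P̂_i′), r_1(P̂_{-i})) for all k = 1, …, m. -/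
open Finset

noncomputable section

/-- A preference is a linear order over the `m` alternatives, represented as a bijection
from rank positions (0-based: position `0` is the top) to alternatives. -/
abbrev Pref (m : ℕ) := Fin m ≃ Fin m

namespace PFBRPaper

variable {m n : ℕ}

/-- `a` is strictly preferred to `b` under `P`. -/
def Prefers (P : Pref m) (a b : Fin m) : Prop := P.symm a < P.symm b

/-- The last alternative `a_m` (0-based index `m-1`). -/
def lastAlt (m : ℕ) [NeZero m] : Fin m :=
  ⟨m - 1, Nat.sub_lt (Nat.pos_of_ne_zero (NeZero.ne m)) Nat.one_pos⟩

/-- Every alternative is top-ranked by some preference in the domain. -/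
def MinimallyRich [NeZero m] (D : Set (Pref m)) : Prop :=
  ∀ a : Fin m, ∃ P ∈ D, P 0 = a

/-- The preference ranking `a_m` first, ..., `a_1` last. -/
def revPref (m : ℕ) : Pref m :=
  ⟨Fin.rev, Fin.rev, fun i => Fin.rev_rev i, fun i => Fin.rev_rev i⟩

/-- Diversity, with the labeling convention: the domain contains the preference ranking
`a_1` first, `a_2` second, ..., `a_m` last (the identity), together with its
complete reversal. -/
def Diversity (D : Set (Pref m)) : Prop :=
  Equiv.refl (Fin m) ∈ D ∧ revPref m ∈ D

/-- Two preferences are adjacent: the alternatives at two contiguous rank positions are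
swapped and everything else is unchanged. -/
def Adjacent (P P' : Pref m) : Prop :=
  P ≠ P' ∧ ∃ k : ℕ, ∃ hk : k + 1 < m,
    P ⟨k, Nat.lt_of_succ_lt hk⟩ = P' ⟨k + 1, hk⟩ ∧
    P ⟨k + 1, hk⟩ = P' ⟨k, Nat.lt_of_succ_lt hk⟩ ∧
    ∀ l : Fin m, (l : ℕ) ≠ k → (l : ℕ) ≠ k + 1 → P l = P' l

/-- `π 0, …, π (v-1)` is a path in `D` connecting `P` and `P'`. -/
def IsPath (D : Set (Pref m)) (P P' : Pref m) (π : ℕ → Pref m) (v : ℕ) : Prop :=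
  1 ≤ v ∧ (∀ i < v, π i ∈ D) ∧
  (∀ i < v, ∀ j < v, π i = π j → i = j) ∧
  π 0 = P ∧ π (v - 1) = P' ∧
  ∀ i, i + 1 < v → Adjacent (π i) (π (i + 1))

/-- The path `π 0, …, π (v-1)` has no `{a,b}`-restoration: the relative ranking of
`a` and `b` switches at most once along the path. -/
def NoRestoration (π : ℕ → Pref m) (v : ℕ) (a b : Fin m) : Prop :=
  ∀ i j k : ℕ, i < j → j < k → k < v →
    ¬(Prefers (π i) a b ∧ Prefers (π j) b a ∧ Prefers (π k) a b) ∧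
    ¬(Prefers (π i) b a ∧ Prefers (π j) a b ∧ Prefers (π k) b a)

def NoRestorationDomain (D : Set (Pref m)) : Prop :=
  ∀ P ∈ D, ∀ P' ∈ D, P ≠ P' → ∀ a b : Fin m,
    ∃ π v, IsPath D P P' π v ∧ NoRestoration π v a b

def RegularDomain [NeZero m] (D : Set (Pref m)) : Prop :=
  MinimallyRich D ∧ Diversity D ∧ NoRestorationDomain D

/-- `a ≈ b`: the two alternatives are strongly connected in the domain `D`. -/
def StronglyConnected [NeZero m] (D : Set (Pref m)) (a b : Fin m) : Prop :=
  a ≠ b ∧ ∃ P ∈ D, ∃ P' ∈ D,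
    P 0 = a ∧ P 1 = b ∧ P' 0 = b ∧ P' 1 = a ∧
    ∀ k : Fin m, 2 ≤ (k : ℕ) → P k = P' k

/-- `l` is a vertex-path of the graph `G_≈^B(D)`. -/
def IsVertexPathOn [NeZero m] (D : Set (Pref m)) (B : Set (Fin m)) (l : List (Fin m)) : Prop :=
  l ≠ [] ∧ l.Nodup ∧ (∀ x ∈ l, x ∈ B) ∧ l.Chain' (StronglyConnected D)

/-- `l` is a vertex-path of `G_≈^B(D)` connecting `a` and `b`. -/
def VertexPathBetween [NeZero m] (D : Set (Pref m)) (B : Set (Fin m)) (a b : Fin m)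
    (l : List (Fin m)) : Prop :=
  IsVertexPathOn D B l ∧ l.head? = some a ∧ l.getLast? = some b

/-- `a` is a leaf of the subgraph `G_≈^B(D)`. -/
def IsLeaf [NeZero m] (D : Set (Pref m)) (B : Set (Fin m)) (a : Fin m) : Prop :=
  a ∈ B ∧ ∃! b : Fin m, b ∈ B ∧ StronglyConnected D a b

/-- Single-peakedness w.r.t. the natural order. -/
def SinglePeaked [NeZero m] (P : Pref m) : Prop :=
  ∀ a b : Fin m, ((a < b ∧ b < P 0) ∨ (P 0 < b ∧ b < a)) → Prefers P b a

/-- A `(p,q)`-hybrid preference (thresholds `p < q`, 0-based). -/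
def IsHybridPref [NeZero m] (p q : Fin m) (P : Pref m) : Prop :=
  (∀ r s : Fin m, ((r ≤ p ∧ s ≤ p) ∨ (q ≤ r ∧ q ≤ s)) →
      ((r < s ∧ s < P 0) ∨ (P 0 < s ∧ s < r)) → Prefers P s r) ∧
  (P 0 ≤ p → ∀ l : Fin m, p ≤ l → l ≤ q → l ≠ p → Prefers P p l) ∧
  (q ≤ P 0 → ∀ l : Fin m, p ≤ l → l ≤ q → l ≠ q → Prefers P q l)

/-- The `(p,q)`-hybrid domain of all `(p,q)`-hybrid preferences. -/
def hybridDomain [NeZero m] (p q : Fin m) : Set (Pref m) := {P | IsHybridPref p q P}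

/-- `D` is a `(p,q)`-hybrid* domain. -/
def IsHybridStar [NeZero m] (D : Set (Pref m)) (p q : Fin m) : Prop :=
  D ⊆ hybridDomain p q ∧
  (∀ k : Fin m, k ≠ 0 → k ≠ lastAlt m →
      ∃ l, VertexPathBetween D Set.univ 0 (lastAlt m) l ∧ k ∈ l) ∧
  ((p : ℕ) + 1 < (q : ℕ) → ∀ a : Fin m, ¬ IsLeaf D (Set.Icc p q) a)

/-- A lottery over the alternatives. -/
def Lottery (m : ℕ) : Type :=
  {f : Fin m → ℝ // (∀ a, 0 ≤ f a) ∧ ∑ a, f a = 1}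

/-- The probability that a lottery assigns to a set of alternatives. -/
def Lottery.prob (lam : Lottery m) (B : Finset (Fin m)) : ℝ := ∑ a ∈ B, lam.1 a

/-- The support of a lottery. -/
def Lottery.supp (lam : Lottery m) : Finset (Fin m) :=
  Finset.univ.filter (fun a => 0 < lam.1 a)

/-- The degenerate lottery on `a`. -/
def degLottery (a : Fin m) : Lottery m :=
  ⟨fun b => if b = a then 1 else 0,
   fun b => by by_cases h : b = a <;> simp [h],
   by simp⟩

/-- A profile of preferences drawn from the domain `D`. -/
abbrev Profile (D : Set (Pref m)) (n : ℕ) := Fin n → D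

/-- The top-ranked alternative of a preference in the domain. -/
def topOf [NeZero m] {D : Set (Pref m)} (P : D) : Fin m := P.1 0

def Unanimous [NeZero m] {D : Set (Pref m)} (φ : Profile D n → Lottery m) : Prop :=
  ∀ (P : Profile D n) (a : Fin m), (∀ i, topOf (P i) = a) → φ P = degLottery a

/-- The total probability of the `k` top-ranked alternatives of `P` under `lam`. -/
def topSum (lam : Lottery m) (P : Pref m) (k : ℕ) : ℝ :=
  ∑ t ∈ Finset.univ.filter (fun t : Fin m => (t : ℕ) < k), lam.1 (P t)

/-- Strategy-proofness: truth-telling first-order stochastically dominates any unilateral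
misrepresentation. -/
def StrategyProof {D : Set (Pref m)} (φ : Profile D n → Lottery m) : Prop :=
  ∀ (i : Fin n) (P : Profile D n) (Pi' : D) (k : ℕ), k ≤ m →
    topSum (φ (Function.update P i Pi')) (P i).1 k ≤ topSum (φ P) (P i).1 k

def TopsOnly [NeZero m] {D : Set (Pref m)} (φ : Profile D n → Lottery m) : Prop :=
  ∀ P P' : Profile D n, (∀ i, topOf (P i) = topOf (P' i)) → φ P = φ P'

def Anonymous {D : Set (Pref m)} (φ : Profile D n → Lottery m) : Prop :=
  ∀ (P : Profile D n) (σ : Equiv.Perm (Fin n)), φ (P ∘ σ) = φ P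

/-- The interval `[a_k, a_m]`. -/
def upSet (k : Fin m) : Finset (Fin m) := Finset.univ.filter (fun a => k ≤ a)

/-- The interval `[a_1, a_k]`. -/
def downSet (k : Fin m) : Finset (Fin m) := Finset.univ.filter (fun a => a ≤ k)

/-- The interval `[a_p, a_q]`. -/
def midSet (p q : Fin m) : Finset (Fin m) := Finset.univ.filter (fun a => p ≤ a ∧ a ≤ q)

/-- `S(k,P)`: the voters whose preference top is not to the left of `a_k`. -/
def voterSet [NeZero m] {D : Set (Pref m)} (P : Profile D n) (k : Fin m) : Finset (Fin n) :=
  Finset.univ.filter (fun i => k ≤ topOf (P i))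

/-- `β_{S(k,P)}([a_k, a_m])`, with the convention that it is `0` for `k = m`. -/
def tailProb [NeZero m] {D : Set (Pref m)} (β : Finset (Fin n) → Lottery m)
    (P : Profile D n) (k : ℕ) : ℝ :=
  if h : k < m then (β (voterSet P ⟨k, h⟩)).prob (upSet ⟨k, h⟩) else 0

def BallotUnanimity [NeZero m] (β : Finset (Fin n) → Lottery m) : Prop :=
  β Finset.univ = degLottery (lastAlt m) ∧ β ∅ = degLottery 0

def BallotMonotone (β : Finset (Fin n) → Lottery m) : Prop :=
  ∀ S T : Finset (Fin n), S ⊂ T →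
    ∀ k : Fin m, (β S).prob (upSet k) ≤ (β T).prob (upSet k)

/-- `φ` is a probabilistic fixed ballot rule with probabilistic ballots `β`. -/
def IsPFBRWith [NeZero m] {D : Set (Pref m)} (φ : Profile D n → Lottery m)
    (β : Finset (Fin n) → Lottery m) : Prop :=
  BallotUnanimity β ∧ BallotMonotone β ∧
  ∀ (P : Profile D n) (k : Fin m),
    (φ P).1 k = tailProb β P (k : ℕ) - tailProb β P ((k : ℕ) + 1)

def IsPFBR [NeZero m] {D : Set (Pref m)} (φ : Profile D n → Lottery m) : Prop :=
  ∃ β, IsPFBRWith φ β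

/-- The constrained random-dictatorship condition w.r.t. `a_p` and `a_q`. -/
def ConstrainedRD (p q : Fin m) (β : Finset (Fin n) → Lottery m) : Prop :=
  ∃ ε : Fin n → ℝ, (∀ i, 0 ≤ ε i) ∧ ∑ i, ε i = 1 ∧
    ∀ S : Finset (Fin n),
      (β S).prob (upSet q) = ∑ i ∈ S, ε i ∧
      (β S).prob (downSet p) = ∑ i ∈ Sᶜ, ε i

/-- The constrained random-dictatorship condition w.r.t. `a_p` and `a_q` with every
conditional dictatorial coefficient equal to `1/n`. -/
def ConstrainedRDUniform (p q : Fin m) (β : Finset (Fin n) → Lottery m) : Prop :=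
  ∀ S : Finset (Fin n),
    (β S).prob (upSet q) = (S.card : ℝ) / (n : ℝ) ∧
    (β S).prob (downSet p) = ((Sᶜ : Finset (Fin n)).card : ℝ) / (n : ℝ)

/-- Anonymity at the level of probabilistic ballots. -/
def BallotAnonymous (β : Finset (Fin n) → Lottery m) : Prop :=
  ∀ S S' : Finset (Fin n), S.Nonempty → S'.Nonempty → S.card = S'.card → β S = β S'

/-- Per-capita monotonicity w.r.t. `a_p` and `a_q`. -/
def PerCapitaMonotone (p q : Fin m) (β : Finset (Fin n) → Lottery m) : Prop :=
  ∀ S S' : Finset (Fin n), S.Nonempty → S ⊂ S' → S' ⊂ Finset.univ →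
    (∀ t : Fin m, q ≤ t →
      (β S).prob (upSet t) / (S.card : ℝ) ≤ (β S').prob (upSet t) / (S'.card : ℝ)) ∧
    (∀ s : Fin m, s ≤ p →
      (β Sᶜ).prob (downSet s) / (S.card : ℝ) ≤ (β S'ᶜ).prob (downSet s) / (S'.card : ℝ))

/-- Decomposability: `φ` is a mixture of finitely many unanimous and strategy-proof
deterministic social choice functions. -/
def Decomposable [NeZero m] {D : Set (Pref m)} (φ : Profile D n → Lottery m) : Prop :=
  ∃ (r : ℕ) (f : Fin r → (Profile D n → Fin m)) (α : Fin r → ℝ),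
    (∀ k, 0 < α k) ∧ ∑ k, α k = 1 ∧
    (∀ k, Unanimous (fun P => degLottery (f k P)) ∧
          StrategyProof (fun P => degLottery (f k P))) ∧
    ∀ (P : Profile D n) (a : Fin m),
      (φ P).1 a = ∑ k, α k * (if f k P = a then 1 else 0)

/-- `b̂_S^R`: the `≺`-minimum of `supp(β_S) ∩ R` (with the convention `b̂_N^R = a_m`). -/
def bR [NeZero m] (β : Finset (Fin n) → Lottery m) (q : Fin m) (S : Finset (Fin n)) : Fin m :=
  if h : ((β S).supp ∩ upSet q).Nonempty then ((β S).supp ∩ upSet q).min' h else lastAlt m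

/-- `b̂_S^L`: the `≺`-maximum of `supp(β_S) ∩ L` (with the convention `b̂_∅^L = a_1`). -/
def bL [NeZero m] (β : Finset (Fin n) → Lottery m) (p : Fin m) (S : Finset (Fin n)) : Fin m :=
  if h : ((β S).supp ∩ downSet p).Nonempty then ((β S).supp ∩ downSet p).max' h else 0

/-- `α = min over nonempty S ⊂ N of min(β_S(b̂_S^R)/|S|, β_S(b̂_S^L)/(n-|S|))`. -/
def alphaVal [NeZero m] (β : Finset (Fin n) → Lottery m) (p q : Fin m) : ℝ :=
  sInf {x : ℝ | ∃ S : Finset (Fin n), S.Nonempty ∧ S ≠ Finset.univ ∧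
    x = min ((β S).1 (bR β q S) / (S.card : ℝ))
            ((β S).1 (bL β p S) / ((n : ℝ) - (S.card : ℝ)))}

/-- `γ_S = (|S|/n) e_{b̂_S^R} + ((n-|S|)/n) e_{b̂_S^L}`, pointwise. -/
def gammaFun [NeZero m] (β : Finset (Fin n) → Lottery m) (p q : Fin m)
    (S : Finset (Fin n)) (a : Fin m) : ℝ :=
  ((S.card : ℝ) / (n : ℝ)) * (if a = bR β q S then 1 else 0)
  + (((n : ℝ) - (S.card : ℝ)) / (n : ℝ)) * (if a = bL β p S then 1 else 0)

/-- The max-min formula `f(P) = max_{S ⊆ N} min({r_1(P_j) : j ∈ S} ∪ {b_S})`. -/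
def fbrOutcome [NeZero m] {D : Set (Pref m)} (b : Finset (Fin n) → Fin m)
    (P : Profile D n) : Fin m :=
  Finset.univ.sup' Finset.univ_nonempty
    (fun S : Finset (Fin n) =>
      (insert (b S) (S.image (fun j => topOf (P j)))).inf' (Finset.insert_nonempty _ _) id)

/-- `f` is a `(p,q)`-fixed ballot rule with deterministic ballots `b` and constrained
dictator `i`. -/
def IsFBRWith [NeZero m] {D : Set (Pref m)} (p q : Fin m) (f : Profile D n → Fin m)
    (b : Finset (Fin n) → Fin m) (i : Fin n) : Prop :=
  b Finset.univ = lastAlt m ∧ b ∅ = 0 ∧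
  (∀ S T : Finset (Fin n), S ⊂ T → b S ≤ b T) ∧
  (∀ S : Finset (Fin n), (i ∈ S → q ≤ b S) ∧ (i ∉ S → b S ≤ p)) ∧
  ∀ P : Profile D n, f P = fbrOutcome b P

end PFBRPaper

open PFBRPaper

/-!
Strategy-proofness makes the induced scheme local along strong connections `x ≈ y`: a voter who
moves from `x` to `y` only shifts probability from `x` to `y`. By locality the shifted amount is
unchanged when the other voters move inside a component of the graph with the edge `xy` removed.
If `xy` is not a bridge, the amount therefore depends on the voter alone, so that between `x` and
`y` the scheme is a random dictatorship. Along a path `x, y, z` the probability that a coalition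
enforces `y` against `x` is at least that of enforcing `z` against `y`. A graph without leaves has
a non-bridge beyond each of its edges, in either direction, so every edge of the middle interval
is squeezed between random dictatorships and all of them follow the same one. Moving a report
along a path inside the middle interval hence shifts the same amount at every step, and the
intermediate shifts cancel: any two middle alternatives behave as if strongly connected. Outside
the middle interval the strong connections join neighbours only, and hybrid preferences decline
along them.
-/

namespace PFBRPaper

section Graph

variable {V : Type*} {G F : SimpleGraph V}

theorem reachable_deleteEdges_or_of_reachable {x z : V} (h : G.Reachable z x) (y : V) :
    (G.deleteEdges {s(x, y)}).Reachable z x ∨ (G.deleteEdges {s(x, y)}).Reachable z y := by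
  obtain ⟨w⟩ := h
  induction w with
  | nil => exact .inl .rfl
  | @cons a b x hab w ih =>
    by_cases he : s(a, b) = s(x, y)
    · rcases Sym2.mem_iff.1 (he ▸ Sym2.mem_mk_left a b) with rfl | rfl
      · exact .inl .rfl
      · exact .inr .rfl
    · have hab' : (G.deleteEdges {s(x, y)}).Adj a b := by simp [hab, he]
      exact ih.imp hab'.reachable.trans hab'.reachable.trans

theorem setOf_reachable_ssubset_of_isBridge {x y z : V} (hb : F.IsBridge s(y, z))
    (hyz : F.Adj y z) (hzx : z ≠ x) :
    {u | (F.deleteEdges {s(y, z)}).Reachable z u} ⊂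
      {u | (F.deleteEdges {s(x, y)}).Reachable y u} := by
  have hzy : ¬(F.deleteEdges {s(y, z)}).Reachable z y := fun h => hb h.symm
  refine (Set.ssubset_iff_of_subset ?_).2 ⟨y, .rfl, hzy⟩
  classical
  rintro u ⟨w⟩
  have hy : y ∉ w.support := fun h => hzy (w.takeUntil y h).reachable
  have hxy : s(x, y) ∉ (w.mapLe (F.deleteEdges_le _)).edges := fun h =>
    hy (w.snd_mem_support_of_mem_edges (by simpa using h))
  have hyz' : (F.deleteEdges {s(x, y)}).Adj y z := by
    simp [hyz, hyz.ne.symm, hzx]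
  exact hyz'.reachable.trans ((w.mapLe (F.deleteEdges_le _)).toDeleteEdge _ hxy).reachable

/- Walking on from `y` without turning back shrinks the far side of each bridge crossed, so a
non-bridge is eventually met. -/
theorem adj_induction_of_no_leaf [Finite V] {r : V → V → Prop}
    (hF : ∀ x y, F.Adj x y → ∃ z, F.Adj y z ∧ z ≠ x)
    (base : ∀ x y, F.Adj x y → ¬F.IsBridge s(x, y) → r x y)
    (step : ∀ x y z, F.Adj x y → F.Adj y z → z ≠ x → r y z → r x y)
    {x y : V} (hxy : F.Adj x y) : r x y := by
  induction hs : {u | (F.deleteEdges {s(x, y)}).Reachable y u} using WellFoundedLT.induction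
    generalizing x y with
  | ind s ih =>
    subst hs
    obtain ⟨z, hyz, hzx⟩ := hF x y hxy
    refine step x y z hxy hyz hzx ?_
    by_cases hb : F.IsBridge s(y, z)
    · exact ih _ (setOf_reachable_ssubset_of_isBridge hb hyz hzx) hyz rfl
    · exact base y z hyz hb

end Graph

section Additive

variable {N : Type*} [Fintype N] {g g' : Finset N → ℝ}

/-- A function of coalitions is additive when it sums individual weights of total `1`, as the
winning probability of a coalition does under a random dictatorship. -/
def IsAdditive (g : Finset N → ℝ) : Prop :=
  ∃ ε : N → ℝ, ∑ i, ε i = 1 ∧ ∀ S, g S = ∑ i ∈ S, ε i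

theorem IsAdditive.compl [DecidableEq N] (h : IsAdditive g) (S : Finset N) : g Sᶜ = 1 - g S := by
  obtain ⟨ε, hε, hg⟩ := h
  rw [hg, hg, ← hε, ← sum_add_sum_compl S ε, add_sub_cancel_left]

theorem IsAdditive.insert [DecidableEq N] (h : IsAdditive g) {S : Finset N} {i : N} (hi : i ∉ S) :
    g (insert i S) = g S + g {i} := by
  obtain ⟨ε, -, hg⟩ := h
  rw [hg, hg, hg, sum_insert hi, sum_singleton, add_comm]

theorem IsAdditive.eq_of_le (h : IsAdditive g) (h' : IsAdditive g') (hle : g ≤ g') : g = g' := by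
  classical
  refine le_antisymm hle fun S => ?_
  have hS := hle Sᶜ
  rw [h.compl, h'.compl] at hS
  linarith

end Additive

section LocalScheme

open Relation (ReflTransGen)

variable {V N : Type*} [DecidableEq N]

/-- The probability that `y` gains when voter `i` changes the reported top from `x` to `y`, the
other reports being those of `X`. -/
def transfer (ψ : (N → V) → V → ℝ) (i : N) (x y : V) (X : N → V) : ℝ :=
  ψ (Function.update X i y) y - ψ (Function.update X i x) y

/-- The probability of `y` when the voters in `S` report `y` and all others report `x`. -/
def ballot (ψ : (N → V) → V → ℝ) (x y : V) (S : Finset N) : ℝ :=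
  ψ (S.piecewise (fun _ => y) fun _ => x) y

theorem eq_of_forall_reflTransGen [Finite N] {β : Type*} {g : (N → V) → β} {r : V → V → Prop}
    (hg : ∀ i X w, r (X i) w → g (Function.update X i w) = g X) {X X' : N → V}
    (h : ∀ i, ReflTransGen r (X i) (X' i)) : g X' = g X := by
  cases nonempty_fintype N
  have hg' : ∀ i X w, ReflTransGen r (X i) w → g (Function.update X i w) = g X := by
    intro i X w hw
    induction hw with
    | refl => rw [Function.update_eq_self]
    | @tail b c _ hbc ih =>
      rw [← ih, ← hg i (Function.update X i b) c (by simpa), Function.update_idem]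
  suffices ∀ T : Finset N, g (T.piecewise X' X) = g X by simpa using this univ
  intro T
  induction T using Finset.induction_on with
  | empty => rw [piecewise_empty]
  | insert i T hi ih => rw [piecewise_insert, hg' i _ _ (by simpa [hi] using h i), ih]

theorem ballot_insert (ψ : (N → V) → V → ℝ) (x y : V) {S : Finset N} {i : N} (hi : i ∉ S) :
    ballot ψ x y (insert i S) =
      ballot ψ x y S + transfer ψ i x y (S.piecewise (fun _ => y) fun _ => x) := by
  have hX : Function.update (S.piecewise (fun _ => y) fun _ => x) i x =
      S.piecewise (fun _ => y) fun _ => x := Function.update_eq_self_iff.2 (by simp [hi])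
  rw [transfer, ballot, ballot, piecewise_insert, hX, add_sub_cancel]

theorem transfer_update_self (ψ : (N → V) → V → ℝ) (i : N) (x y w : V) (X : N → V) :
    transfer ψ i x y (Function.update X i w) = transfer ψ i x y X := by
  simp only [transfer, Function.update_idem]

variable [Fintype V] [DecidableEq V] {G F : SimpleGraph V} {ψ : (N → V) → V → ℝ} {x y z : V}

/-- A unanimous random voting scheme in which a voter who moves the reported top along an edge of
`G` affects only the probabilities of the two endpoints, in favour of the new report. This is
what strategy-proofness retains on tops when the edges are strong connections. -/
structure IsLocalScheme (G : SimpleGraph V) (ψ : (N → V) → V → ℝ) : Prop where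
  mem_stdSimplex : ∀ X, ψ X ∈ stdSimplex ℝ V
  unanimous : ∀ a, ψ (fun _ => a) = Pi.single a 1
  apply_update_of_ne : ∀ {x y c : V}, G.Adj x y → c ≠ x → c ≠ y → ∀ i X,
    ψ (Function.update X i y) c = ψ (Function.update X i x) c
  apply_update_le : ∀ {x y : V}, G.Adj x y → ∀ i X,
    ψ (Function.update X i x) y ≤ ψ (Function.update X i y) y

namespace IsLocalScheme

theorem ballot_empty (h : IsLocalScheme G ψ) (hxy : x ≠ y) : ballot ψ x y ∅ = 0 := by
  rw [ballot, piecewise_empty, h.unanimous, Pi.single_eq_of_ne hxy.symm]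

theorem ballot_univ [Fintype N] (h : IsLocalScheme G ψ) (x y : V) : ballot ψ x y univ = 1 := by
  rw [ballot, piecewise_univ, h.unanimous, Pi.single_eq_same]

theorem add_apply_update (h : IsLocalScheme G ψ) (hxy : G.Adj x y) (i : N) (X : N → V) :
    ψ (Function.update X i y) x + ψ (Function.update X i y) y =
      ψ (Function.update X i x) x + ψ (Function.update X i x) y := by
  have hsum : ∑ c, (ψ (Function.update X i y) c - ψ (Function.update X i x) c) = 0 := by
    rw [sum_sub_distrib, (h.mem_stdSimplex _).2, (h.mem_stdSimplex _).2, sub_self]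
  rw [← sum_subset (subset_univ {x, y}), sum_pair hxy.ne] at hsum
  · linarith
  · intro c _ hc
    rw [mem_insert, mem_singleton, not_or] at hc
    rw [h.apply_update_of_ne hxy hc.1 hc.2, sub_self]

theorem transfer_comm (h : IsLocalScheme G ψ) (hxy : G.Adj x y) (i : N) (X : N → V) :
    transfer ψ i x y X = transfer ψ i y x X := by
  have := h.add_apply_update hxy i X
  rw [transfer, transfer]
  linarith

theorem transfer_nonneg (h : IsLocalScheme G ψ) (hxy : G.Adj x y) (i : N) (X : N → V) :
    0 ≤ transfer ψ i x y X :=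
  sub_nonneg.2 (h.apply_update_le hxy i X)

theorem update_eq_add_transfer (h : IsLocalScheme G ψ) (hxy : G.Adj x y) (i : N) (X : N → V) :
    ψ (Function.update X i y) = ψ (Function.update X i x) +
      transfer ψ i x y X • (Pi.single y 1 - Pi.single x 1) := by
  ext c
  rcases eq_or_ne c x with rfl | hcx
  · rw [h.transfer_comm hxy]
    simp [transfer, hxy.ne]
  rcases eq_or_ne c y with rfl | hcy
  · simp [transfer, hcx]
  · simp [h.apply_update_of_ne hxy hcx hcy, hcx, hcy]

theorem apply_update_of_adj (h : IsLocalScheme G ψ) {X : N → V} {i : N} {c w : V}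
    (hw : G.Adj (X i) w) (hc : c ≠ X i) (hcw : c ≠ w) : ψ (Function.update X i w) c = ψ X c := by
  rw [h.apply_update_of_ne hw hc hcw, Function.update_eq_self]

theorem transfer_update_of_ne (h : IsLocalScheme G ψ) {X : N → V} {i j : N} {w : V}
    (hj : j ≠ i) (hw : G.Adj (X j) w) (hy : y ≠ X j) (hyw : y ≠ w) :
    transfer ψ i x y (Function.update X j w) = transfer ψ i x y X := by
  have hadj : ∀ v, ψ (Function.update (Function.update X j w) i v) y =
      ψ (Function.update X i v) y := fun v => by
    rw [Function.update_comm hj, h.apply_update_of_adj] <;> simpa [hj]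
  rw [transfer, transfer, hadj, hadj]

theorem transfer_update_of_adj (h : IsLocalScheme G ψ) (hxy : G.Adj x y) {X : N → V} {i j : N}
    {w : V} (hj : j ≠ i) (hw : (G.deleteEdges {s(x, y)}).Adj (X j) w) :
    transfer ψ i x y (Function.update X j w) = transfer ψ i x y X := by
  obtain ⟨hadj, he⟩ := SimpleGraph.deleteEdges_adj.1 hw
  by_cases hy : y ≠ X j ∧ y ≠ w
  · exact h.transfer_update_of_ne hj hadj hy.1 hy.2
  · have hx : x ≠ X j ∧ x ≠ w := by
      have := hxy.ne
      have := hadj.ne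
      grind [Sym2.eq_iff]
    rw [h.transfer_comm hxy, h.transfer_comm hxy, h.transfer_update_of_ne hj hadj hx.1 hx.2]

theorem transfer_eq_of_reachable [Finite N] (h : IsLocalScheme G ψ) (hxy : G.Adj x y)
    {X X' : N → V} {i : N} (hX : ∀ j ≠ i, (G.deleteEdges {s(x, y)}).Reachable (X j) (X' j)) :
    transfer ψ i x y X' = transfer ψ i x y X := by
  rw [← transfer_update_self ψ i x y (X i) X']
  refine eq_of_forall_reflTransGen (r := (G.deleteEdges {s(x, y)}).Adj) ?_ fun j => ?_
  · intro j Y w hw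
    rcases eq_or_ne j i with rfl | hj
    · exact transfer_update_self ..
    · exact h.transfer_update_of_adj hxy hj hw
  · rw [← SimpleGraph.reachable_iff_reflTransGen]
    rcases eq_or_ne j i with rfl | hj
    · rw [Function.update_self]
    · rw [Function.update_of_ne hj]
      exact hX j hj

theorem isAdditive_ballot_of_not_isBridge [Fintype N] (h : IsLocalScheme G ψ)
    (hxy : G.Adj x y) (hb : ¬G.IsBridge s(x, y)) : IsAdditive (ballot ψ x y : Finset N → ℝ) := by
  have hreach : (G.deleteEdges {s(x, y)}).Reachable x y := by
    simpa [SimpleGraph.isBridge_iff] using hb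
  have hsum : ∀ S : Finset N, ballot ψ x y S = ∑ i ∈ S, transfer ψ i x y fun _ => x := by
    intro S
    induction S using Finset.induction_on with
    | empty => rw [h.ballot_empty hxy.ne, sum_empty]
    | insert i S hi ih =>
      rw [ballot_insert ψ x y hi, sum_insert hi, ih, add_comm]
      congr 1
      refine h.transfer_eq_of_reachable hxy fun j _ => ?_
      by_cases hj : j ∈ S <;> simp [hj, hreach]
  exact ⟨_, by rw [← hsum, h.ballot_univ], hsum⟩

theorem apply_eq_of_reflTransGen [Finite N] (h : IsLocalScheme G ψ) {X X' : N → V} {c : V}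
    (hX : ∀ j, ReflTransGen (fun a b => G.Adj a b ∧ c ≠ a ∧ c ≠ b) (X j) (X' j)) :
    ψ X' c = ψ X c :=
  eq_of_forall_reflTransGen (g := fun X => ψ X c)
    (fun _ _ _ hw => h.apply_update_of_adj hw.1 hw.2.1 hw.2.2) hX

theorem apply_piecewise_eq [Finite N] (h : IsLocalScheme G ψ) {a b c : V} (hab : G.Adj a b)
    (hca : c ≠ a) (hcb : c ≠ b) (S : Finset N) (X : N → V) :
    ψ (S.piecewise (fun _ => b) X) c = ψ (S.piecewise (fun _ => a) X) c := by
  refine h.apply_eq_of_reflTransGen fun j => ?_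
  by_cases hj : j ∈ S
  · simpa [hj] using .single ⟨hab, hca, hcb⟩
  · simp [hj, ReflTransGen.refl]

theorem ballot_compl_comm [Fintype N] (h : IsLocalScheme G ψ) (hxy : G.Adj x y) (S : Finset N) :
    ballot ψ y x Sᶜ = 1 - ballot ψ x y S := by
  set X : N → V := S.piecewise (fun _ => y) fun _ => x with hX
  have hX0 : ∀ c ∈ univ, c ∉ ({x, y} : Finset V) → ψ X c = 0 := by
    intro c _ hc
    rw [mem_insert, mem_singleton, not_or] at hc
    have : ψ X c = ψ (fun _ => x) c := by
      rw [hX, h.apply_piecewise_eq hxy hc.1 hc.2, piecewise_same]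
    rw [this, h.unanimous, Pi.single_eq_of_ne hc.1]
  have hsum := (h.mem_stdSimplex X).2
  rw [← sum_subset (subset_univ _) hX0, sum_pair hxy.ne] at hsum
  rw [ballot, ballot, piecewise_compl, ← hX]
  linarith

theorem ballot_le_ballot [Finite N] (h : IsLocalScheme G ψ) (hxy : G.Adj x y) (hyz : G.Adj y z)
    (hzx : z ≠ x) : (ballot ψ y z : Finset N → ℝ) ≤ ballot ψ x y := by
  cases nonempty_fintype N
  intro S
  have hx : ballot ψ y x Sᶜ = ψ (S.piecewise (fun _ => z) fun _ => x) x := by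
    rw [ballot, piecewise_compl, h.apply_piecewise_eq hyz hxy.ne hzx.symm]
  have hz : ballot ψ y z S = ψ (S.piecewise (fun _ => z) fun _ => x) z := by
    rw [ballot, ← piecewise_compl, h.apply_piecewise_eq hxy hzx hyz.ne.symm, piecewise_compl]
  have hle : ∑ c ∈ {x, z}, ψ (S.piecewise (fun _ => z) fun _ => x) c ≤ 1 :=
    (h.mem_stdSimplex _).2 ▸
      sum_le_sum_of_subset_of_nonneg (subset_univ _) fun c _ _ => (h.mem_stdSimplex _).1 c
  rw [sum_pair hzx.symm, ← hx, ← hz, h.ballot_compl_comm hxy] at hle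
  linarith

theorem isAdditive_ballot [Fintype N] (h : IsLocalScheme G ψ) (hFG : F ≤ G)
    (hF : ∀ x y, F.Adj x y → ∃ z, F.Adj y z ∧ z ≠ x) (hxy : F.Adj x y) :
    IsAdditive (ballot ψ x y : Finset N → ℝ) := by
  have lower {x y : V} (hxy : F.Adj x y) :
      ∃ g : Finset N → ℝ, IsAdditive g ∧ g ≤ ballot ψ x y := by
    refine adj_induction_of_no_leaf
      (r := fun x y => ∃ g : Finset N → ℝ, IsAdditive g ∧ g ≤ ballot ψ x y) hF
      (fun x y hxy hb => ?_) (fun x y z hxy hyz hzx => ?_) hxy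
    · exact ⟨_, h.isAdditive_ballot_of_not_isBridge (hFG hxy) fun hG => hb (hG.anti hFG), le_rfl⟩
    · rintro ⟨g, hg, hle⟩
      exact ⟨g, hg, hle.trans (h.ballot_le_ballot (hFG hxy) (hFG hyz) hzx)⟩
  obtain ⟨g, hg, hle⟩ := lower hxy
  obtain ⟨g', hg', hle'⟩ := lower hxy.symm
  have upper : ballot ψ x y ≤ g' := fun S => by
    have := hle' Sᶜ
    rw [hg'.compl, h.ballot_compl_comm (hFG hxy)] at this
    linarith
  exact le_antisymm (hg.eq_of_le hg' (hle.trans upper) ▸ upper) hle ▸ hg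

theorem ballot_eq_ballot [Finite N] (h : IsLocalScheme G ψ) (hFG : F ≤ G)
    (hF : ∀ x y, F.Adj x y → ∃ z, F.Adj y z ∧ z ≠ x) (hxy : F.Adj x y) (hyz : F.Adj y z) :
    (ballot ψ y z : Finset N → ℝ) = ballot ψ x y := by
  cases nonempty_fintype N
  rcases eq_or_ne z x with rfl | hzx
  · ext S
    rw [← compl_compl S, h.ballot_compl_comm (hFG hxy), ← (h.isAdditive_ballot hFG hF hxy).compl]
  · exact (h.isAdditive_ballot hFG hF hyz).eq_of_le (h.isAdditive_ballot hFG hF hxy)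
      (h.ballot_le_ballot (hFG hxy) (hFG hyz) hzx)

theorem transfer_eq_ballot [Fintype N] (h : IsLocalScheme G ψ) (hG : G.Preconnected)
    (hxy : G.Adj x y) (hadd : IsAdditive (ballot ψ x y : Finset N → ℝ)) (i : N) (X : N → V) :
    transfer ψ i x y X = ballot ψ x y {i} := by
  classical
  let S : Finset N := {j | j ≠ i ∧ ¬(G.deleteEdges {s(x, y)}).Reachable (X j) x}
  have hi : i ∉ S := by simp [S]
  have hX : ∀ j ≠ i, (G.deleteEdges {s(x, y)}).Reachable (X j)
      (S.piecewise (fun _ => y) (fun _ => x) j) := by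
    intro j hj
    by_cases hjx : (G.deleteEdges {s(x, y)}).Reachable (X j) x
    · simp [S, hjx]
    · simpa [S, hj, hjx] using (reachable_deleteEdges_or_of_reachable (hG _ x) y).resolve_left hjx
  have := ballot_insert ψ x y hi
  rw [hadd.insert hi, h.transfer_eq_of_reachable hxy hX] at this
  linarith

theorem exists_update_eq_add_smul [Finite N] (h : IsLocalScheme G ψ) (hG : G.Preconnected)
    (hFG : F ≤ G) (hF : ∀ x y, F.Adj x y → ∃ z, F.Adj y z ∧ z ≠ x) (hxy : F.Reachable x y)
    (i : N) (X : N → V) : ∃ δ : ℝ, 0 ≤ δ ∧ ψ (Function.update X i y) =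
      ψ (Function.update X i x) + δ • (Pi.single y 1 - Pi.single x 1) := by
  cases nonempty_fintype N
  rw [SimpleGraph.reachable_iff_reflTransGen] at hxy
  rcases hxy.cases_head with rfl | ⟨w, hxw, -⟩
  · exact ⟨0, le_rfl, by simp⟩
  have transfer_eq : ∀ {a b}, F.Adj a b → transfer ψ i a b X = ballot ψ a b {i} := fun hab =>
    h.transfer_eq_ballot hG (hFG hab) (h.isAdditive_ballot hFG hF hab) i X
  refine ⟨ballot ψ x w {i}, transfer_eq hxw ▸ h.transfer_nonneg (hFG hxw) i X, ?_⟩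
  have ballot_eq : ∀ {a b}, ReflTransGen F.Adj x a → F.Adj a b →
      (ballot ψ a b : Finset N → ℝ) = ballot ψ x w := by
    intro a b ha
    induction ha generalizing b with
    | refl =>
      intro hab
      rw [h.ballot_eq_ballot hFG hF hxw.symm hab, h.ballot_eq_ballot hFG hF hxw hxw.symm]
    | tail _ hca ih => exact fun hab => (h.ballot_eq_ballot hFG hF hca hab).trans (ih hca)
  induction hxy with
  | refl => simp
  | tail ha hab ih =>
    rw [h.update_eq_add_transfer (hFG hab), ih, transfer_eq hab, ballot_eq ha hab]
    module

end IsLocalScheme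

end LocalScheme

variable {m : ℕ}

section TopSum

variable {P P' : Pref m}

/-- The set of the `k` top-ranked alternatives of `P`. -/
def topSet (P : Pref m) (k : ℕ) : Finset (Fin m) := {a | (P.symm a : ℕ) < k}

theorem topSum_eq_sum_topSet (l : Lottery m) (P : Pref m) (k : ℕ) :
    topSum l P k = ∑ a ∈ topSet P k, l.1 a :=
  sum_equiv P (by simp [topSet]) fun _ _ => rfl

theorem topSum_succ (l : Lottery m) (P : Pref m) (t : Fin m) :
    topSum l P (t + 1) = l.1 (P t) + topSum l P t := by
  have : univ.filter (fun s : Fin m => (s : ℕ) < t + 1) =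
      insert t (univ.filter fun s : Fin m => (s : ℕ) < t) := by
    ext s
    simp [Nat.lt_succ_iff_lt_or_eq, Fin.ext_iff, or_comm, -Order.lt_add_one_iff]
  rw [topSum, topSum, this, sum_insert (by simp)]

theorem topSum_one [NeZero m] (l : Lottery m) (P : Pref m) : topSum l P 1 = l.1 (P 0) := by
  simpa [topSum] using topSum_succ l P 0

theorem topSet_congr {k : ℕ} (h : ∀ t : Fin m, k ≤ t → P t = P' t) : topSet P k = topSet P' k := by
  ext a
  simp only [topSet, mem_filter_univ]
  constructor <;> intro ha <;> by_contra! hk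
  · have : P.symm a = P'.symm a := by rw [Equiv.symm_apply_eq, h _ hk, Equiv.apply_symm_apply]
    omega
  · have : P.symm a = P'.symm a := by rw [Equiv.eq_symm_apply, ← h _ hk, Equiv.apply_symm_apply]
    omega

theorem topSum_le_of_eq_add_smul {l l' : Lottery m} {a b : Fin m} {δ : ℝ} (hab : Prefers P a b)
    (hδ : 0 ≤ δ) (h : l'.1 = l.1 + δ • (Pi.single b 1 - Pi.single a 1)) (k : ℕ) :
    topSum l' P k ≤ topSum l P k := by
  have hba : b ∈ topSet P k → a ∈ topSet P k := by
    simpa only [topSet, mem_filter_univ] using fun hb => lt_trans (Fin.lt_def.1 hab) hb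
  have hle : (if b ∈ topSet P k then (1 : ℝ) else 0) ≤ if a ∈ topSet P k then 1 else 0 := by
    split_ifs <;> simp_all
  simp only [topSum_eq_sum_topSet, h, Pi.add_apply, Pi.smul_apply, Pi.sub_apply, smul_eq_mul,
    sum_add_distrib, ← mul_sum, sum_sub_distrib, sum_pi_single']
  nlinarith

end TopSum

section Arm

variable {α : Type*} [LinearOrder α] {p q g : α} {A : Set α}

/-- `A` is one of the two arms `L = [a_1, a_p]` and `R = [a_q, a_m]` of the hybrid order, and `g`
is its gate `a_p` or `a_q`, the endpoint it shares with the middle interval. -/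
def IsArm (p q g : α) (A : Set α) : Prop := (g = p ∧ A = Set.Iic p) ∨ (g = q ∧ A = Set.Ici q)

theorem isArm_left (p q : α) : IsArm p q p (Set.Iic p) := .inl ⟨rfl, rfl⟩

theorem isArm_right (p q : α) : IsArm p q q (Set.Ici q) := .inr ⟨rfl, rfl⟩

theorem IsArm.ordConnected (hA : IsArm p q g A) : A.OrdConnected := by
  rcases hA with ⟨-, rfl⟩ | ⟨-, rfl⟩
  exacts [Set.ordConnected_Iic, Set.ordConnected_Ici]

theorem IsArm.gate_mem (hA : IsArm p q g A) : g ∈ A := by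
  rcases hA with ⟨rfl, rfl⟩ | ⟨rfl, rfl⟩
  exacts [Set.self_mem_Iic, Set.self_mem_Ici]

theorem IsArm.gate_mem_Icc (hA : IsArm p q g A) (hpq : p ≤ q) : g ∈ Set.Icc p q := by
  rcases hA with ⟨rfl, -⟩ | ⟨rfl, -⟩
  exacts [Set.left_mem_Icc.2 hpq, Set.right_mem_Icc.2 hpq]

theorem IsArm.gate_between {a t : α} (hA : IsArm p q g A) (ha : a ∈ A) (ht : t ∉ A) :
    (t ≤ g ∧ g ≤ a) ∨ (a ≤ g ∧ g ≤ t) := by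
  rcases hA with ⟨rfl, rfl⟩ | ⟨rfl, rfl⟩
  exacts [.inr ⟨ha, (not_le.1 ht).le⟩, .inl ⟨(not_le.1 ht).le, ha⟩]

end Arm

variable [NeZero m] {D : Set (Pref m)} {p q : Fin m}

/-- The graph `G_≈^A(D)` of strong connections. -/
def strongGraph (D : Set (Pref m)) : SimpleGraph (Fin m) where
  Adj := StronglyConnected D
  symm := ⟨fun _ _ ⟨hne, P, hP, P', hP', h0, h1, h0', h1', hk⟩ =>
    ⟨hne.symm, P', hP', P, hP, h0', h1', h0, h1, fun t ht => (hk t ht).symm⟩⟩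
  loopless := ⟨fun _ h => h.1 rfl⟩

section InducedScheme

variable {n : ℕ} {φ : Profile D n → Lottery m} {ψ : (Fin n → Fin m) → Lottery m}

theorem topSum_induced_le (hrich : MinimallyRich D) (hsp : StrategyProof φ)
    (hψ : ∀ P : Profile D n, ψ (fun i => topOf (P i)) = φ P) {P : Pref m} (hP : P ∈ D) (i : Fin n)
    (X : Fin n → Fin m) (y : Fin m) {k : ℕ} (hk : k ≤ m) :
    topSum (ψ (Function.update X i y)) P k ≤ topSum (ψ (Function.update X i (P 0))) P k := by
  choose T hT hT0 using hrich
  have hψ' : ∀ R : D, φ (Function.update (fun j => ⟨T (X j), hT _⟩) i R) =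
      ψ (Function.update X i (topOf R)) := by
    intro R
    rw [← hψ]
    congr 1
    ext j
    rcases eq_or_ne j i with rfl | hj <;> simp [topOf, *]
  simpa [hψ', topOf, hT0] using
    hsp i (Function.update (fun j => ⟨T (X j), hT _⟩) i ⟨P, hP⟩) ⟨T y, hT y⟩ k hk

theorem two_le_symm_apply_of_ne {P : Pref m} {c : Fin m} (h0 : c ≠ P 0) (h1 : c ≠ P 1) :
    2 ≤ (P.symm c : ℕ) := by
  have h0' : P.symm c ≠ 0 := fun h => h0 (by rw [← h, P.apply_symm_apply])
  have h1' : P.symm c ≠ 1 := fun h => h1 (by rw [← h, P.apply_symm_apply])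
  have hlt := (P.symm c).isLt
  by_contra! h
  interval_cases hc : (P.symm c : ℕ)
  · exact h0' (Fin.ext (by simp [hc]))
  · exact h1' (Fin.ext (by rw [hc, Fin.val_one', Nat.mod_eq_of_lt hlt]))

theorem isLocalScheme_of_strategyProof (hrich : MinimallyRich D) (hu : Unanimous φ)
    (hsp : StrategyProof φ) (hψ : ∀ P : Profile D n, ψ (fun i => topOf (P i)) = φ P) :
    IsLocalScheme (strongGraph D) fun X => (ψ X).1 where
  mem_stdSimplex X := (ψ X).2
  unanimous a := by
    obtain ⟨P, hP, rfl⟩ := hrich a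
    have := hψ fun _ => ⟨P, hP⟩
    rw [hu _ (P 0) fun _ => rfl] at this
    ext b
    rw [Pi.single_apply]
    exact congrFun (congrArg Subtype.val this) b
  apply_update_of_ne := by
    rintro _ _ c ⟨-, P, hP, P', hP', rfl, rfl, h0', -, hPP'⟩ hc0 hc1 i X
    have topSum_eq : ∀ k, 2 ≤ k → k ≤ m →
        topSum (ψ (Function.update X i (P 1))) P k =
          topSum (ψ (Function.update X i (P 0))) P k := by
      refine fun k hk hkm => le_antisymm (topSum_induced_le hrich hsp hψ hP i X _ hkm) ?_
      have := topSum_induced_le hrich hsp hψ hP' i X (P 0) hkm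
      rwa [h0', topSum_eq_sum_topSet, topSum_eq_sum_topSet,
        ← topSet_congr fun t ht => hPP' t (hk.trans ht), ← topSum_eq_sum_topSet,
        ← topSum_eq_sum_topSet] at this
    have hc := two_le_symm_apply_of_ne hc0 hc1
    have hlt := (P.symm c).isLt
    have := topSum_eq _ (hc.trans (Nat.le_succ _)) hlt
    rwa [topSum_succ, topSum_succ, P.apply_symm_apply, topSum_eq _ hc hlt.le,
      add_left_inj] at this
  apply_update_le := by
    rintro _ _ ⟨-, -, -, P', hP', -, -, rfl, -⟩ i X
    simpa only [topSum_one] using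
      topSum_induced_le hrich hsp hψ hP' i X _ (Nat.one_le_iff_ne_zero.2 (NeZero.ne m))

end InducedScheme

section Hybrid

variable {P : Pref m} {a b : Fin m}

theorem eq_top_of_prefers_second {s : Fin m} (h : Prefers P s (P 1)) : s = P 0 := by
  by_contra hs
  have := two_le_symm_apply_of_ne hs fun h1 => lt_irrefl _ (h1 ▸ h)
  rw [Prefers, P.symm_apply_apply, Fin.lt_def, Fin.val_one'] at h
  have := Nat.mod_le 1 m
  omega

theorem StronglyConnected.mem_mid_or_covBy (hD : D ⊆ hybridDomain p q) (hpq : p ≤ q)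
    (h : StronglyConnected D a b) (hab : a < b) :
    (p ≤ a ∧ b ≤ q) ∨ (a ⋖ b ∧ (b ≤ p ∨ q ≤ a)) := by
  obtain ⟨-, P, hP, P', hP', h0, h1, h0', h1', -⟩ := h
  obtain ⟨harm, hleft, -⟩ := hD hP
  obtain ⟨harm', -, hright'⟩ := hD hP'
  have second : ∀ s, Prefers P s b → s = a := fun s hs => h0 ▸ eq_top_of_prefers_second (h1 ▸ hs)
  have second' : ∀ s, Prefers P' s a → s = b := fun s hs =>
    h0' ▸ eq_top_of_prefers_second (h1' ▸ hs)
  have covBy : b ≤ p ∨ q ≤ a → a ⋖ b := by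
    refine fun h => ⟨hab, fun s has hsb => has.ne' (second s ?_)⟩
    exact harm b s (by grind) (.inr ⟨h0 ▸ has, hsb⟩)
  have left : a < p → b ≤ p := by
    intro hap
    by_contra! hpb
    rcases le_or_gt b q with hbq | hqb
    · exact hap.ne' (second p (hleft (h0 ▸ hap.le) b hpb.le hbq hpb.ne'))
    · have haq := hap.trans_le hpq
      exact haq.ne' (second q (harm b q (.inr ⟨hqb.le, le_rfl⟩) (.inr ⟨h0 ▸ haq, hqb⟩)))
  have right : q < b → q ≤ a := by
    intro hqb
    by_contra! haq
    rcases le_or_gt p a with hpa | hap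
    · exact hqb.ne (second' q (hright' (h0' ▸ hqb.le) a hpa haq.le haq.ne))
    · have hpb := hpq.trans_lt hqb
      exact hpb.ne (second' p (harm' a p (.inl ⟨hap.le, le_rfl⟩) (.inl ⟨hap, h0' ▸ hpb⟩)))
  grind

theorem preconnected_strongGraph (hm : 2 < m)
    (h : ∀ k : Fin m, k ≠ 0 → k ≠ lastAlt m →
      ∃ l, VertexPathBetween D Set.univ 0 (lastAlt m) l ∧ k ∈ l) :
    (strongGraph D).Preconnected := by
  have reachable_of_mem : ∀ {l k}, VertexPathBetween D Set.univ 0 (lastAlt m) l → k ∈ l →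
      (strongGraph D).Reachable 0 k := by
    rintro l k ⟨⟨-, -, -, hl⟩, hhead, -⟩ hk
    refine hl.induction (fun a => (strongGraph D).Reachable 0 a) l
      (fun a b hab ha => ha.trans (SimpleGraph.Adj.reachable hab)) (fun hne => ?_) k hk
    rw [← Option.some_inj.1 ((List.head?_eq_some_head hne).symm.trans hhead)]
  have reachable_zero : ∀ k, (strongGraph D).Reachable 0 k := by
    intro k
    by_cases h0 : k = 0
    · rw [h0]
    by_cases hlast : k = lastAlt m
    · obtain ⟨l, hl, -⟩ := h ⟨1, by omega⟩ (by simp [Fin.ext_iff])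
        (by rw [lastAlt, ne_eq, Fin.mk.injEq]; omega)
      exact hlast ▸ reachable_of_mem hl (List.mem_of_getLast? hl.2.2)
    · obtain ⟨l, hl, hk⟩ := h k h0 hlast
      exact reachable_of_mem hl hk
  exact fun a b => (reachable_zero a).symm.trans (reachable_zero b)

theorem adj_of_covBy (hD : D ⊆ hybridDomain p q) (hpq : p ≤ q) (hG : (strongGraph D).Preconnected)
    {g : Fin m} {A : Set (Fin m)} (hA : IsArm p q g A) (ha : a ∈ A) (hb : b ∈ A) (hab : a ⋖ b) :
    (strongGraph D).Adj a b := by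
  have harm : b ≤ p ∨ q ≤ a := by
    rcases hA with ⟨-, rfl⟩ | ⟨-, rfl⟩
    exacts [.inl hb, .inr ha]
  obtain ⟨w⟩ := hG a b
  obtain ⟨⟨⟨c, d⟩, hcd⟩, -, hca, hda⟩ :=
    w.exists_boundary_dart (Set.Iic a) Set.self_mem_Iic (by simpa using hab.lt)
  simp only [Set.mem_Iic, not_le] at hca hda
  rcases StronglyConnected.mem_mid_or_covBy hD hpq hcd (hca.trans_lt hda) with
    ⟨hpc, hdq⟩ | ⟨hcov, -⟩
  · rcases harm with hbp | hqa
    · exact absurd (hab.lt.trans_le hbp) (hpc.trans hca).not_gt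
    · exact absurd (hqa.trans_lt hab.lt) ((hab.ge_of_gt hda).trans hdq).not_gt
  · obtain rfl := hca.antisymm (not_lt.1 fun hac => hcov.2 hac hda)
    exact hab.unique_right hcov ▸ hcd

theorem preconnected_induce_Icc (hD : D ⊆ hybridDomain p q) (hpq : p ≤ q)
    (hG : (strongGraph D).Preconnected) :
    ((strongGraph D).induce (Set.Icc p q)).Preconnected := by
  have proj : ∀ {a b}, a < b → (strongGraph D).Adj a b →
      ((strongGraph D).induce (Set.Icc p q)).Reachable
        (Set.projIcc p q hpq a) (Set.projIcc p q hpq b) := by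
    intro a b hlt hab
    rcases StronglyConnected.mem_mid_or_covBy hD hpq hab hlt with ⟨hpa, hbq⟩ | ⟨-, hbp | hqa⟩
    · rw [Set.projIcc_of_mem hpq ⟨hpa, hlt.le.trans hbq⟩,
        Set.projIcc_of_mem hpq ⟨hpa.trans hlt.le, hbq⟩]
      exact SimpleGraph.Adj.reachable hab
    · rw [Set.projIcc_of_le_left hpq hbp, Set.projIcc_of_le_left hpq (hlt.le.trans hbp)]
    · rw [Set.projIcc_of_right_le hpq hqa, Set.projIcc_of_right_le hpq (hqa.trans hlt.le)]
  intro a b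
  have hab := hG a b
  rw [SimpleGraph.reachable_iff_reflTransGen] at hab ⊢
  rw [← Set.projIcc_val hpq a, ← Set.projIcc_val hpq b]
  refine hab.lift' _ fun c d hcd => ?_
  rw [Function.onFun, ← SimpleGraph.reachable_iff_reflTransGen]
  rcases lt_or_gt_of_ne hcd.ne with hlt | hlt
  · exact proj hlt hcd
  · exact (proj hlt hcd.symm).symm

/-- The graph `G_≈^M(D)` on the middle interval `[a_p, a_q]`, with the alternatives outside it
kept as isolated vertices. -/
def midGraph (D : Set (Pref m)) (p q : Fin m) : SimpleGraph (Fin m) :=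
  ((strongGraph D).induce (Set.Icc p q)).spanningCoe

theorem midGraph_adj :
    (midGraph D p q).Adj a b ↔ (strongGraph D).Adj a b ∧ a ∈ Set.Icc p q ∧ b ∈ Set.Icc p q := by
  simp only [midGraph, SimpleGraph.map_adj, SimpleGraph.comap_adj,
    Function.Embedding.subtype_apply, Subtype.exists]
  grind

theorem midGraph_le : midGraph D p q ≤ strongGraph D := fun _ _ h => (midGraph_adj.1 h).1

theorem exists_midGraph_adj_ne (h : ∀ a, ¬IsLeaf D (Set.Icc p q) a)
    (hab : (midGraph D p q).Adj a b) : ∃ c, (midGraph D p q).Adj b c ∧ c ≠ a := by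
  obtain ⟨hadj, ha, hb⟩ := midGraph_adj.1 hab
  by_contra! hc
  exact h b ⟨hb, a, ⟨ha, hadj.symm⟩, fun c ⟨hcM, hbc⟩ => hc c (midGraph_adj.2 ⟨hbc, hb, hcM⟩)⟩

theorem midGraph_reachable (hD : D ⊆ hybridDomain p q) (hpq : p ≤ q)
    (hG : (strongGraph D).Preconnected) (ha : a ∈ Set.Icc p q) (hb : b ∈ Set.Icc p q) :
    (midGraph D p q).Reachable a b :=
  (preconnected_induce_Icc hD hpq hG ⟨a, ha⟩ ⟨b, hb⟩).map
    (SimpleGraph.Embedding.spanningCoe _).toHom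

theorem prefers_top (h : a ≠ P 0) : Prefers P (P 0) a := by
  rw [Prefers, P.symm_apply_apply, Fin.pos_iff_ne_zero]
  exact fun h0 => h (by rw [← h0, P.apply_symm_apply])

section ArmOrder

variable {g : Fin m} {A : Set (Fin m)}

theorem IsHybridPref.prefers_of_isArm (hP : IsHybridPref p q P) (hA : IsArm p q g A)
    (ha : a ∈ A) (hb : b ∈ A) (hab : (P 0 ≤ a ∧ a < b) ∨ (b < a ∧ a ≤ P 0)) : Prefers P a b := by
  rcases eq_or_ne a (P 0) with rfl | hne
  · exact prefers_top (by grind)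
  · exact hP.1 b a (by rcases hA with ⟨-, rfl⟩ | ⟨-, rfl⟩ <;> simp_all) (by grind)

theorem IsHybridPref.prefers_gate (hP : IsHybridPref p q P) (hA : IsArm p q g A) (htop : P 0 ∈ A)
    (ha : a ∈ Set.Icc p q) (hag : a ≠ g) : Prefers P g a := by
  rcases hA with ⟨rfl, rfl⟩ | ⟨rfl, rfl⟩
  exacts [hP.2.1 htop a ha.1 ha.2 hag, hP.2.2 htop a ha.1 ha.2 hag]

variable {α : Type*} [Preorder α] {f : Fin m → α}

theorem IsHybridPref.le_of_between (hP : IsHybridPref p q P) (hA : IsArm p q g A)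
    (hf : ∀ a ∈ A, ∀ b ∈ A, a ⋖ b ∨ b ⋖ a → Prefers P a b → f b ≤ f a) (ha : a ∈ A) (hb : b ∈ A)
    (hab : (P 0 ≤ a ∧ a ≤ b) ∨ (b ≤ a ∧ a ≤ P 0)) : f b ≤ f a := by
  have anti : AntitoneOn f (A ∩ Set.Ici (P 0)) :=
    antitoneOn_of_succ_le (hA.ordConnected.inter Set.ordConnected_Ici) fun _ hmax hc hs =>
      hf _ hc.1 _ hs.1 (.inl (Order.covBy_succ_of_not_isMax hmax))
        (hP.prefers_of_isArm hA hc.1 hs.1 (.inl ⟨hc.2, Order.lt_succ_of_not_isMax hmax⟩))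
  have mono : MonotoneOn f (A ∩ Set.Iic (P 0)) :=
    monotoneOn_of_le_succ (hA.ordConnected.inter Set.ordConnected_Iic) fun _ hmax hc hs =>
      hf _ hs.1 _ hc.1 (.inr (Order.covBy_succ_of_not_isMax hmax))
        (hP.prefers_of_isArm hA hs.1 hc.1 (.inr ⟨Order.lt_succ_of_not_isMax hmax, hs.2⟩))
  rcases hab with ⟨hta, hab⟩ | ⟨hba, hat⟩
  · exact anti ⟨ha, hta⟩ ⟨hb, hta.trans hab⟩ hab
  · exact mono ⟨hb, hba.trans hat⟩ ⟨ha, hat⟩ hba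

theorem IsHybridPref.le_apply_top_of_mem_arm (hP : IsHybridPref p q P) (hA : IsArm p q g A)
    (hf : ∀ a ∈ A, ∀ b ∈ A, a ⋖ b ∨ b ⋖ a → Prefers P a b → f b ≤ f a) (ha : a ∈ A)
    (htop : P 0 ∈ A) : f a ≤ f (P 0) :=
  hP.le_of_between hA hf htop ha ((le_total (P 0) a).imp (⟨le_rfl, ·⟩) (⟨·, le_rfl⟩))

theorem IsHybridPref.le_apply_top_of_mem_Icc (hP : IsHybridPref p q P) (hpq : p ≤ q)
    (harm : ∀ g A, IsArm p q g A → ∀ a ∈ A, ∀ b ∈ A, a ⋖ b ∨ b ⋖ a → Prefers P a b → f b ≤ f a)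
    (hmid : ∀ a ∈ Set.Icc p q, ∀ b ∈ Set.Icc p q, Prefers P a b → f b ≤ f a)
    (ha : a ∈ Set.Icc p q) : f a ≤ f (P 0) := by
  have of_arm : ∀ {g A}, IsArm p q g A → P 0 ∈ A → f a ≤ f (P 0) := by
    intro g A hA htop
    refine le_trans ?_ (hP.le_apply_top_of_mem_arm hA (harm g A hA) hA.gate_mem htop)
    rcases eq_or_ne a g with rfl | hag
    · rfl
    · exact hmid g (hA.gate_mem_Icc hpq) a ha (hP.prefers_gate hA htop ha hag)
  rcases le_or_gt (P 0) p with htop | hp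
  · exact of_arm (isArm_left p q) htop
  rcases le_or_gt q (P 0) with htop | hq
  · exact of_arm (isArm_right p q) htop
  rcases eq_or_ne a (P 0) with rfl | hne
  · rfl
  · exact hmid _ ⟨hp.le, hq.le⟩ a ha (prefers_top hne)

theorem IsHybridPref.le_apply_top (hP : IsHybridPref p q P) (hpq : p ≤ q)
    (harm : ∀ g A, IsArm p q g A → ∀ a ∈ A, ∀ b ∈ A, a ⋖ b ∨ b ⋖ a → Prefers P a b → f b ≤ f a)
    (hmid : ∀ a ∈ Set.Icc p q, ∀ b ∈ Set.Icc p q, Prefers P a b → f b ≤ f a)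
    (a : Fin m) : f a ≤ f (P 0) := by
  have of_arm : ∀ {g A}, IsArm p q g A → a ∈ A → f a ≤ f (P 0) := by
    intro g A hA ha
    by_cases htop : P 0 ∈ A
    · exact hP.le_apply_top_of_mem_arm hA (harm g A hA) ha htop
    · exact (hP.le_of_between hA (harm g A hA) hA.gate_mem ha (hA.gate_between ha htop)).trans
        (hP.le_apply_top_of_mem_Icc hpq harm hmid (hA.gate_mem_Icc hpq))
  rcases le_or_gt a p with hap | hpa
  · exact of_arm (isArm_left p q) hap
  rcases le_or_gt q a with hqa | haq
  · exact of_arm (isArm_right p q) hqa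
  · exact hP.le_apply_top_of_mem_Icc hpq harm hmid ⟨hpa.le, haq.le⟩

end ArmOrder

end Hybrid

theorem IsLocalScheme.topSum_update_le_top {n : ℕ} {ψ : (Fin n → Fin m) → Lottery m}
    (hloc : IsLocalScheme (strongGraph D) fun X => (ψ X).1) (hgap : (p : ℕ) + 1 < q)
    (hstar : IsHybridStar D p q) {P : Pref m} (hP : P ∈ hybridDomain p q) (i : Fin n)
    (X : Fin n → Fin m) (y : Fin m) (k : ℕ) :
    topSum (ψ (Function.update X i y)) P k ≤ topSum (ψ (Function.update X i (P 0))) P k := by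
  obtain ⟨hD, hpath, hleaf⟩ := hstar
  have hpq : p ≤ q := Fin.le_def.2 (by omega)
  have hG := preconnected_strongGraph (by omega) hpath
  refine hP.le_apply_top (f := fun y => topSum (ψ (Function.update X i y)) P k) hpq
    (fun g A hA a ha b hb hcov hab => ?_) (fun a ha b hb hab => ?_) y
  · have hadj : (strongGraph D).Adj a b := by
      rcases hcov with hcov | hcov
      · exact adj_of_covBy hD hpq hG hA ha hb hcov
      · exact (adj_of_covBy hD hpq hG hA hb ha hcov).symm
    exact topSum_le_of_eq_add_smul hab (hloc.transfer_nonneg hadj i X)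
      (hloc.update_eq_add_transfer hadj i X) k
  · obtain ⟨δ, hδ, hshift⟩ := hloc.exists_update_eq_add_smul hG midGraph_le
      (fun _ _ => exists_midGraph_adj_ne (hleaf hgap)) (midGraph_reachable hD hpq hG ha hb) i X
    exact topSum_le_of_eq_add_smul hab hδ hshift k

end PFBRPaper

theorem induced_scheme_strategyproof_on_hybrid_general {m n : ℕ} [NeZero m] {D : Set (Pref m)}
    {p q : Fin m} (hgap : (p : ℕ) + 1 < q) (hrich : MinimallyRich D) (hstar : IsHybridStar D p q)
    {φ : Profile D n → Lottery m} (hu : Unanimous φ) (hsp : StrategyProof φ)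
    {ψ : (Fin n → Fin m) → Lottery m} (hψ : ∀ P : Profile D n, ψ (fun i => topOf (P i)) = φ P)
    {P : Pref m} (hP : P ∈ hybridDomain p q) (i : Fin n) (X : Fin n → Fin m) (y : Fin m)
    (k : ℕ) :
    topSum (ψ (Function.update X i y)) P k ≤ topSum (ψ (Function.update X i (P 0))) P k :=
  (isLocalScheme_of_strategyProof hrich hu hsp hψ).topSum_update_le_top hgap hstar hP i X y k

/-- The random voting scheme induced by a unanimous, strategy-proof,
tops-only RSCF on a regular `(p,q)`-hybrid* domain (`q - p > 1`) is strategy-proof on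
the full `(p,q)`-hybrid domain. -/
theorem induced_scheme_strategyproof_on_hybrid (m n : ℕ) [NeZero m] (hm : 3 ≤ m)
    (hn : 2 ≤ n) (D : Set (Pref m)) (p q : Fin m) (hgap : (p : ℕ) + 1 < (q : ℕ))
    (hreg : RegularDomain D) (hstar : IsHybridStar D p q)
    (φ : Profile D n → Lottery m)
    (hu : Unanimous φ) (hsp : StrategyProof φ) (hto : TopsOnly φ)
    (ψ : (Fin n → Fin m) → Lottery m)
    (hψ : ∀ P : Profile D n, ψ (fun i => topOf (P i)) = φ P) :
    ∀ (i : Fin n) (Q : Fin n → Pref m), (∀ j, Q j ∈ hybridDomain p q) →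
      ∀ Q' ∈ hybridDomain p q, ∀ k : ℕ, k ≤ m →
        topSum (ψ (Function.update (fun j => (Q j) 0) i (Q' 0))) (Q i) k
          ≤ topSum (ψ (fun j => (Q j) 0)) (Q i) k := by
  intro i Q hQ Q' _ k _
  simpa only [Function.update_eq_self] using
    induced_scheme_strategyproof_on_hybrid_general hgap hreg.1 hstar hu hsp hψ (hQ i) i
      (fun j => Q j 0) (Q' 0) k
end
end

section
/- Let 1 ≤ p < q ≤ m with 1 < q − p < m − 1 and let (β_S)_{S⊆N} be the probabilistic ballots of a (p, q)-PFBR on [D_≺(p, q)]^n which is anonymous (β_S = β_{S′} for all nonempty S, S′ ⊆ N with |S| = |S′|, so every conditional dictatorial coefficient equals 1/n) and satisfies per-capita monotonicity w.r.t. a_p and a_q. Then for all nonempty S ⊂ S′ ⊆ N, b̂_S^R ⪯ b̂_{S′}^R. -/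
open Finset

noncomputable section

open PFBRPaper

/-!
The threshold `b̂_S^R` is the largest `a_t` such that `[a_t, a_m]` carries the whole mass that `β_S`
places on `R`. This mass is `|S| / n`, so its per-capita value `1 / n` does not depend on `S`.
Per-capita monotonicity at `a_t = b̂_S^R` therefore says that `[a_t, a_m]` also carries the whole
mass that `β_{S'}` places on `R`, that is `b̂_S^R ⪯ b̂_{S'}^R`. For `S' = N`, ballot unanimity makes
`b̂_N^R` the last alternative.
-/

namespace PFBRPaper

variable {m n : ℕ}

lemma mem_upSet {a k : Fin m} : a ∈ upSet k ↔ k ≤ a := by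
  simp only [upSet, mem_filter, mem_univ, true_and]

lemma upSet_subset_upSet {k l : Fin m} (h : k ≤ l) : upSet l ⊆ upSet k :=
  fun _ ha ↦ mem_upSet.2 (h.trans (mem_upSet.1 ha))

lemma le_lastAlt [NeZero m] (a : Fin m) : a ≤ lastAlt m :=
  Nat.le_sub_one_of_lt a.isLt

lemma Lottery.mem_supp {lam : Lottery m} {a : Fin m} : a ∈ lam.supp ↔ lam.1 a ≠ 0 := by
  simp only [Lottery.supp, mem_filter, mem_univ, true_and]
  exact (lam.2.1 a).lt_iff_ne'

lemma supp_degLottery (a : Fin m) : (degLottery a).supp = {a} := by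
  ext b
  rw [Lottery.mem_supp, mem_singleton]
  exact Ne.ite_ne_right_iff one_ne_zero

lemma Lottery.prob_le_prob_iff_supp_inter_subset {lam : Lottery m} {B C : Finset (Fin m)}
    (hBC : B ⊆ C) : lam.prob C ≤ lam.prob B ↔ lam.supp ∩ C ⊆ B := by
  have hnonneg : ∀ a ∈ C \ B, 0 ≤ lam.1 a := fun a _ ↦ lam.2.1 a
  calc lam.prob C ≤ lam.prob B
      ↔ ∑ a ∈ C \ B, lam.1 a ≤ 0 := by
        rw [Lottery.prob, Lottery.prob, ← sum_sdiff hBC, add_le_iff_nonpos_left]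
    _ ↔ ∀ a ∈ C \ B, lam.1 a = 0 := by
        rw [(sum_nonneg hnonneg).ge_iff_eq', sum_eq_zero_iff_of_nonneg hnonneg]
    _ ↔ lam.supp ∩ C ⊆ B := by
        simp only [subset_iff, mem_inter, mem_sdiff, Lottery.mem_supp]
        exact forall_congr' fun a ↦ by tauto

section RightThreshold

variable [NeZero m] {β : Finset (Fin n) → Lottery m} {q : Fin m} {S S' : Finset (Fin n)}

lemma le_bR_iff_supp_inter_subset {t : Fin m} :
    t ≤ bR β q S ↔ (β S).supp ∩ upSet q ⊆ upSet t := by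
  unfold bR
  split_ifs with h
  · simp only [le_min'_iff, subset_iff, mem_upSet]
  · simp only [le_lastAlt, not_nonempty_iff_eq_empty.1 h, empty_subset]

lemma le_bR : q ≤ bR β q S :=
  le_bR_iff_supp_inter_subset.2 inter_subset_right

lemma le_bR_iff_prob_le {t : Fin m} (hqt : q ≤ t) :
    t ≤ bR β q S ↔ (β S).prob (upSet q) ≤ (β S).prob (upSet t) := by
  rw [le_bR_iff_supp_inter_subset,
    Lottery.prob_le_prob_iff_supp_inter_subset (upSet_subset_upSet hqt)]

lemma le_bR_of_eq_degLottery {a : Fin m} (h : β S = degLottery a) : a ≤ bR β q S := by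
  rw [le_bR_iff_supp_inter_subset, h, supp_degLottery]
  exact inter_subset_left.trans (singleton_subset_iff.2 (mem_upSet.2 le_rfl))

lemma bR_le_bR_of_prob_div_le {c c' : ℝ} (hc : 0 ≤ c) (hc' : 0 < c')
    (hR : (β S').prob (upSet q) / c' ≤ (β S).prob (upSet q) / c)
    (htail : (β S).prob (upSet (bR β q S)) / c ≤ (β S').prob (upSet (bR β q S)) / c') :
    bR β q S ≤ bR β q S' := by
  have hmass : (β S).prob (upSet q) ≤ (β S).prob (upSet (bR β q S)) :=
    (le_bR_iff_prob_le le_bR).1 le_rfl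
  rw [le_bR_iff_prob_le le_bR, ← div_le_div_iff_of_pos_right hc']
  calc (β S').prob (upSet q) / c'
      ≤ (β S).prob (upSet q) / c := hR
    _ ≤ (β S).prob (upSet (bR β q S)) / c := by gcongr
    _ ≤ (β S').prob (upSet (bR β q S)) / c' := htail

end RightThreshold

end PFBRPaper

theorem bR_monotone_general {m n : ℕ} [NeZero m] {q : Fin m} {β : Finset (Fin n) → Lottery m}
    (hunan : β univ = degLottery (lastAlt m))
    (hR : ∀ T : Finset (Fin n), (β T).prob (upSet q) = (T.card : ℝ) / n)
    (hpcm : ∀ T T' : Finset (Fin n), T.Nonempty → T ⊂ T' → T' ⊂ univ → ∀ t, q ≤ t →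
      (β T).prob (upSet t) / T.card ≤ (β T').prob (upSet t) / T'.card)
    {S S' : Finset (Fin n)} (hS : S.Nonempty) (hSS' : S ⊂ S') : bR β q S ≤ bR β q S' := by
  have hperCapita {T : Finset (Fin n)} (hT : T.Nonempty) :
      (β T).prob (upSet q) / T.card = 1 / n := by
    rw [hR, div_right_comm, div_self (Nat.cast_ne_zero.2 hT.card_ne_zero)]
  have hS' : S'.Nonempty := hS.mono hSS'.subset
  rcases eq_or_ne S' univ with rfl | hne
  · exact (le_lastAlt _).trans (le_bR_of_eq_degLottery hunan)
  · exact bR_le_bR_of_prob_div_le (Nat.cast_nonneg _) (Nat.cast_pos.2 hS'.card_pos)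
      ((hperCapita hS').trans (hperCapita hS).symm).le
      (hpcm S S' hS hSS' (ssubset_univ_iff.2 hne) _ le_bR)

/-- For an anonymous per-capita monotone `(p,q)`-PFBR
(`1 < q - p < m - 1`), the right thresholds `b̂_S^R` are monotone in `S`. -/
theorem bR_monotone (m n : ℕ) [NeZero m] (hm : 3 ≤ m) (hn : 2 ≤ n)
    (p q : Fin m) (hgap1 : (p : ℕ) + 1 < (q : ℕ)) (hgap2 : (q : ℕ) - (p : ℕ) < m - 1)
    (φ : Profile (hybridDomain p q) n → Lottery m)
    (β : Finset (Fin n) → Lottery m) (hβ : IsPFBRWith φ β)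
    (hanon : BallotAnonymous β) (hcrd : ConstrainedRDUniform p q β)
    (hpcm : PerCapitaMonotone p q β) :
    ∀ S S' : Finset (Fin n), S.Nonempty → S ⊂ S' → bR β q S ≤ bR β q S' :=
  fun _ _ hS hSS' ↦ bR_monotone_general hβ.1.1 (fun T ↦ (hcrd T).1)
    (fun T T' hT hTT' hT' ↦ (hpcm T T' hT hTT' hT').1) hS hSS'
end
end
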